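/- arXiv:2508.10508 — 6 statements merged into one kernel-verified Lean document; each statement's English description precedes it below -/
import Mathlib

section
/- Let 𝒜 : ℝ^{2×2} → ℝ^{2×2} be a linear projection (𝒜∘𝒜 = 𝒜) such that the induced first-order operator 𝔸u := 𝒜[Du] is ℂ-elliptic. Then there exists a first-order linear constant-coefficient homogeneous differential operator 𝕃 with D² = 𝕃∘𝔸; concretely: for every multi-index α with |α| = 2 and every component m ∈ {1,2} there exist linear functionals ℓ₁^{α,m}, ℓ₂^{α,m} : ℝ^{2×2} → ℝ such that for every twice continuously differentiable u : ℝ² → ℝ² one has ∂^α u_m = ∂₁(ℓ₁^{α,m}(𝒜[Du])) + ∂₂(ℓ₂^{α,m}(𝒜[Du])) pointwise on ℝ². -/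
/-!
ℂ-ellipticity says that the complexified kernel of `𝒜` contains no nonzero singular matrix
(`eq_zero_of_det_eq_zero`), since a singular `2 × 2` matrix has the form `v ξᵀ`.
The second derivatives of `u` at a point form a pair `S k = ∂_k Du` with the symmetry
`S k i j = S j i k`, and `∂_k (𝒜[Du]) = 𝒜 (S k)`. So it suffices that the linear map
`S ↦ (𝒜 (S 0), 𝒜 (S 1))` is injective on the space of such symmetric pairs: a linear left inverse
then yields the functionals `ℓ`.

Injectivity (`symm_pair_eq_zero`): suppose `𝒜 (S 0) = 𝒜 (S 1) = 0`. If `det (S 0) ≠ 0`, the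
quadratic polynomial `det (z S 0 + S 1)` has a complex root `z`, whence `z S 0 + S 1 = 0`; by
symmetry the columns of `S 0` are then proportional, a contradiction. Hence `det (S 0) = 0`, so
`S 0 = 0`; by symmetry the first column of `S 1` vanishes, so `S 1` is singular and vanishes too.
-/

/-- Partial derivative in direction `j` of a scalar function on `ℝ²`. -/
noncomputable def pd2 (j : Fin 2) (f : (Fin 2 → ℝ) → ℝ) (x : Fin 2 → ℝ) : ℝ :=
  fderiv ℝ f x (Pi.single j 1)

/-- Jacobian matrix `(Du)_{ij} = ∂_j u_i`. -/
noncomputable def jac2 (u : (Fin 2 → ℝ) → (Fin 2 → ℝ)) (x : Fin 2 → ℝ) :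
    Matrix (Fin 2) (Fin 2) ℝ :=
  Matrix.of fun i j => pd2 j (fun y => u y i) x

/-- Complexification `𝒜_ℂ(M) := 𝒜(Re M) + i 𝒜(Im M)` (entrywise real/imaginary parts). -/
noncomputable def complexify2
    (𝒜 : Matrix (Fin 2) (Fin 2) ℝ →ₗ[ℝ] Matrix (Fin 2) (Fin 2) ℝ)
    (M : Matrix (Fin 2) (Fin 2) ℂ) : Matrix (Fin 2) (Fin 2) ℂ :=
  Matrix.of fun i j =>
    ((𝒜 (Matrix.of fun a b => (M a b).re)) i j : ℂ) +
      Complex.I * ((𝒜 (Matrix.of fun a b => (M a b).im)) i j : ℂ)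

/-- ℂ-ellipticity of the operator `u ↦ 𝒜[Du]`: for every `ξ ∈ ℂ² \ {0}` the map
`v ↦ 𝒜_ℂ(v ξᵀ)` is injective. -/
def CElliptic2 (𝒜 : Matrix (Fin 2) (Fin 2) ℝ →ₗ[ℝ] Matrix (Fin 2) (Fin 2) ℝ) : Prop :=
  ∀ ξ : Fin 2 → ℂ, ξ ≠ 0 →
    Function.Injective fun v : Fin 2 → ℂ =>
      complexify2 𝒜 (Matrix.of fun i j => v i * ξ j)

/-- A singular complex matrix annihilated by the complexification of a ℂ-elliptic `𝒜` is zero. -/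
lemma eq_zero_of_det_eq_zero
    {𝒜 : Matrix (Fin 2) (Fin 2) ℝ →ₗ[ℝ] Matrix (Fin 2) (Fin 2) ℝ} (hell : CElliptic2 𝒜)
    (M : Matrix (Fin 2) (Fin 2) ℂ) (hdet : M 0 0 * M 1 1 = M 0 1 * M 1 0)
    (hre : 𝒜 (Matrix.of fun a b => (M a b).re) = 0)
    (him : 𝒜 (Matrix.of fun a b => (M a b).im) = 0) : M = 0 := by
  have key : ∀ v ξ : Fin 2 → ℂ, ξ ≠ 0 → M = Matrix.of (fun i j => v i * ξ j) → M = 0 := by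
    intro v ξ hξ hM
    have hv : v = 0 := by
      apply hell ξ hξ
      have h0 : complexify2 𝒜 M = 0 := by
        ext i j
        simp [complexify2, hre, him]
      have h1 : complexify2 𝒜 0 = 0 := by
        have hz : (Matrix.of fun _ _ => 0 : Matrix (Fin 2) (Fin 2) ℝ) = 0 := rfl
        ext i j
        simp [complexify2, hz]
      have hz : (Matrix.of fun _ _ => 0 : Matrix (Fin 2) (Fin 2) ℂ) = 0 := rfl
      simp only [← hM, h0, Pi.zero_apply, zero_mul, hz, h1]
    rw [hM, hv]
    ext i j
    simp
  by_cases h00 : M 0 0 = 0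
  · by_cases h01 : M 0 1 = 0
    · by_cases h1 : M 1 = 0
      · ext i j
        fin_cases i <;> fin_cases j <;> simp [h00, h01, h1]
      · refine key ![0, 1] (M 1) h1 ?_
        ext i j
        fin_cases i <;> fin_cases j <;> simp [h00, h01]
    · have h10 : M 1 0 = 0 := by
        have : M 0 1 * M 1 0 = 0 := by rw [← hdet, h00, zero_mul]
        exact (mul_eq_zero.mp this).resolve_left h01
      refine key ![1, M 1 1 / M 0 1] (M 0) (fun h => h01 (by simp [h])) ?_
      ext i j
      fin_cases i <;> fin_cases j <;> simp [h00, h01, h10]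
  · refine key ![1, M 1 0 / M 0 0] (M 0) (fun h => h00 (by simp [h])) ?_
    ext i j
    fin_cases i <;> fin_cases j <;> simp [h00]
    field_simp
    linear_combination hdet

lemma eq_zero_of_real_det_eq_zero
    {𝒜 : Matrix (Fin 2) (Fin 2) ℝ →ₗ[ℝ] Matrix (Fin 2) (Fin 2) ℝ} (hell : CElliptic2 𝒜)
    (M : Matrix (Fin 2) (Fin 2) ℝ) (hdet : M 0 0 * M 1 1 = M 0 1 * M 1 0)
    (hM : 𝒜 M = 0) : M = 0 := by
  have h := eq_zero_of_det_eq_zero hell (Matrix.of fun i j => (M i j : ℂ))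
    (by simp only [Matrix.of_apply]; exact_mod_cast hdet)
    hM
    (by
      have hz : (Matrix.of fun _ _ => 0 : Matrix (Fin 2) (Fin 2) ℝ) = 0 := rfl
      simp [hz])
  ext i j
  simpa using congrFun (congrFun h i) j

/-- Injectivity of `S ↦ (𝒜 (S 0), 𝒜 (S 1))` on pairs with the symmetry of a second derivative. -/
lemma symm_pair_eq_zero
    {𝒜 : Matrix (Fin 2) (Fin 2) ℝ →ₗ[ℝ] Matrix (Fin 2) (Fin 2) ℝ} (hell : CElliptic2 𝒜)
    (S : Fin 2 → Matrix (Fin 2) (Fin 2) ℝ) (hS : ∀ k i j, S k i j = S j i k)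
    (h : ∀ k, 𝒜 (S k) = 0) : S = 0 := by
  have hd : S 0 0 0 * S 0 1 1 = S 0 0 1 * S 0 1 0 := by
    by_contra hne
    have ha : ((S 0 0 0 : ℂ) * S 0 1 1 - S 0 0 1 * S 0 1 0) ≠ 0 := by
      intro h'
      apply hne
      have : (S 0 0 0 : ℂ) * S 0 1 1 = S 0 0 1 * S 0 1 0 := sub_eq_zero.mp h'
      exact_mod_cast this
    -- `z` is a root of the quadratic polynomial `det (z S 0 + S 1)`
    obtain ⟨z, hz⟩ : ∃ z : ℂ, ((S 0 0 0 : ℂ) * S 0 1 1 - S 0 0 1 * S 0 1 0) * (z * z) +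
        ((S 0 0 0 : ℂ) * S 1 1 1 + S 1 0 0 * S 0 1 1 - S 0 0 1 * S 1 1 0 - S 1 0 1 * S 0 1 0) * z +
        ((S 1 0 0 : ℂ) * S 1 1 1 - S 1 0 1 * S 1 1 0) = 0 := by
      refine exists_quadratic_eq_zero ha ?_
      obtain ⟨s, hs⟩ := IsAlgClosed.exists_pow_nat_eq
        (discrim ((S 0 0 0 : ℂ) * S 0 1 1 - S 0 0 1 * S 0 1 0)
          ((S 0 0 0 : ℂ) * S 1 1 1 + S 1 0 0 * S 0 1 1 - S 0 0 1 * S 1 1 0 - S 1 0 1 * S 0 1 0)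
          ((S 1 0 0 : ℂ) * S 1 1 1 - S 1 0 1 * S 1 1 0)) (n := 2) (by norm_num)
      exact ⟨s, by rw [← hs, sq]⟩
    have h0 := eq_zero_of_det_eq_zero hell
      (Matrix.of fun i j => z * (S 0 i j : ℂ) + (S 1 i j : ℂ))
      (by simp only [Matrix.of_apply]; linear_combination hz)
      (by
        have : (Matrix.of fun a b => ((Matrix.of fun i j => z * (S 0 i j : ℂ) + (S 1 i j : ℂ)) a b
            : ℂ).re) = z.re • S 0 + S 1 := by
          ext i j; simp
        rw [this, map_add, map_smul, h, h]; simp)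
      (by
        have : (Matrix.of fun a b => ((Matrix.of fun i j => z * (S 0 i j : ℂ) + (S 1 i j : ℂ)) a b
            : ℂ).im) = z.im • S 0 := by
          ext i j; simp
        rw [this, map_smul, h]; simp)
    have e0 : z * (S 0 0 0 : ℂ) + (S 1 0 0 : ℂ) = 0 := congrFun (congrFun h0 0) 0
    have e1 : z * (S 0 1 0 : ℂ) + (S 1 1 0 : ℂ) = 0 := congrFun (congrFun h0 1) 0
    rw [hS 1 0 0] at e0
    rw [hS 1 1 0] at e1
    exact ha (by linear_combination (S 0 0 0 : ℂ) * e1 - (S 0 1 0 : ℂ) * e0)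
  have h0 : S 0 = 0 := eq_zero_of_real_det_eq_zero hell (S 0) hd (h 0)
  have h1 : S 1 = 0 := by
    refine eq_zero_of_real_det_eq_zero hell (S 1) ?_ (h 1)
    rw [hS 1 0 0, hS 1 1 0, h0]
    simp
  funext k
  fin_cases k
  · exact h0
  · exact h1

/-- Pairs of matrices `S 0, S 1` with the index symmetry of `S k i j = ∂_k ∂_j u_i`. -/
def symmPairs : Submodule ℝ (Fin 2 → Matrix (Fin 2) (Fin 2) ℝ) where
  carrier := {S | ∀ k i j, S k i j = S j i k}
  add_mem' := by
    intro S T hS hT k i j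
    simp only [Pi.add_apply, Matrix.add_apply]
    rw [hS k i j, hT k i j]
  zero_mem' := fun _ _ _ => rfl
  smul_mem' := by
    intro c S hS k i j
    simp only [Pi.smul_apply, Matrix.smul_apply]
    rw [hS k i j]

lemma exists_leftInverse_symmPairs
    {𝒜 : Matrix (Fin 2) (Fin 2) ℝ →ₗ[ℝ] Matrix (Fin 2) (Fin 2) ℝ} (hell : CElliptic2 𝒜) :
    ∃ g : (Fin 2 → Matrix (Fin 2) (Fin 2) ℝ) →ₗ[ℝ] symmPairs,
      ∀ S : symmPairs, g (fun k => 𝒜 (S.1 k)) = S := by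
  let T : symmPairs →ₗ[ℝ] (Fin 2 → Matrix (Fin 2) (Fin 2) ℝ) :=
    (LinearMap.pi fun k => 𝒜 ∘ₗ LinearMap.proj k) ∘ₗ symmPairs.subtype
  have hT : LinearMap.ker T = ⊥ := by
    rw [LinearMap.ker_eq_bot']
    intro S hS
    exact Subtype.ext (symm_pair_eq_zero hell S.1 S.2 fun k => congrFun hS k)
  obtain ⟨g, hg⟩ := T.exists_leftInverse_of_injective hT
  exact ⟨g, fun S => LinearMap.congr_fun hg S⟩

lemma differentiable_pd2 {f : (Fin 2 → ℝ) → ℝ} (hf : ContDiff ℝ 2 f) (j : Fin 2) :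
    Differentiable ℝ (pd2 j f) := by
  have h : Differentiable ℝ (fderiv ℝ f) :=
    (hf.fderiv_right (m := 1) (by norm_num)).differentiable (by norm_num)
  intro x
  exact (h x).clm_apply (differentiableAt_const _)

lemma pd2_comm {f : (Fin 2 → ℝ) → ℝ} (hf : ContDiff ℝ 2 f) (k l : Fin 2) (x : Fin 2 → ℝ) :
    pd2 k (pd2 l f) x = pd2 l (pd2 k f) x := by
  have h : Differentiable ℝ (fderiv ℝ f) :=
    (hf.fderiv_right (m := 1) (by norm_num)).differentiable (by norm_num)
  have e : ∀ a b : Fin 2, pd2 a (pd2 b f) x =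
      fderiv ℝ (fderiv ℝ f) x (Pi.single a 1) (Pi.single b 1) := by
    intro a b
    change fderiv ℝ (fun y => fderiv ℝ f y (Pi.single b 1)) x (Pi.single a 1) = _
    rw [fderiv_clm_apply (h x) (differentiableAt_const _)]
    simp
  rw [e, e]
  exact (hf.contDiffAt.isSymmSndFDerivAt (by simp)) _ _

/-- Partial derivatives commute with a linear functional of the Jacobian. -/
lemma pd2_linear_jac2 (φ : Matrix (Fin 2) (Fin 2) ℝ →ₗ[ℝ] ℝ)
    {u : (Fin 2 → ℝ) → (Fin 2 → ℝ)} (hu : ContDiff ℝ 2 u) (k : Fin 2) (x : Fin 2 → ℝ) :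
    pd2 k (fun y => φ (jac2 u y)) x =
      φ (Matrix.of fun i j => pd2 k (pd2 j (fun z => u z i)) x) := by
  have hφ : ∀ M : Matrix (Fin 2) (Fin 2) ℝ,
      φ M = ∑ i, ∑ j, M i j * φ (Matrix.single i j 1) := by
    intro M
    conv_lhs => rw [Matrix.matrix_eq_sum_single M]
    simp only [map_sum]
    refine Finset.sum_congr rfl fun i _ => Finset.sum_congr rfl fun j _ => ?_
    rw [← smul_eq_mul, ← map_smul, Matrix.smul_single, smul_eq_mul, mul_one]
  have hd : ∀ i j : Fin 2, HasFDerivAt (pd2 j (fun z => u z i))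
      (fderiv ℝ (pd2 j (fun z => u z i)) x) x := fun i j =>
    (differentiable_pd2 (contDiff_pi.mp hu i) j x).hasFDerivAt
  have hs := HasFDerivAt.fun_sum (u := Finset.univ) fun i _ =>
    HasFDerivAt.fun_sum (u := Finset.univ) fun j _ =>
      (hd i j).mul_const (φ (Matrix.single i j 1))
  have hfun : (fun y => φ (jac2 u y)) = fun y => ∑ i, ∑ j,
      pd2 j (fun z => u z i) y * φ (Matrix.single i j 1) := by
    funext y
    rw [hφ]
    rfl
  rw [hφ (Matrix.of _), hfun, pd2, hs.fderiv]
  simp [pd2, mul_comm]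

/-- If `𝒜` is a projection on `ℝ^{2×2}` inducing a ℂ-elliptic operator `𝔸u = 𝒜[Du]`, then
`D² = 𝕃 ∘ 𝔸` for a first-order constant-coefficient operator `𝕃`: for every second-order
multi-index (encoded by the pair `k, l`) and component `m` there are linear functionals
`ℓ 0, ℓ 1` with `∂_k ∂_l u_m = ∂₁(ℓ 0 (𝒜[Du])) + ∂₂(ℓ 1 (𝒜[Du]))` for all `u ∈ C²`. -/
theorem stmt0
    (𝒜 : Matrix (Fin 2) (Fin 2) ℝ →ₗ[ℝ] Matrix (Fin 2) (Fin 2) ℝ)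
    (hproj : ∀ M, 𝒜 (𝒜 M) = 𝒜 M)
    (hell : CElliptic2 𝒜) :
    ∀ k l m : Fin 2,
      ∃ ℓ : Fin 2 → (Matrix (Fin 2) (Fin 2) ℝ →ₗ[ℝ] ℝ),
        ∀ u : (Fin 2 → ℝ) → (Fin 2 → ℝ), ContDiff ℝ 2 u → ∀ x : Fin 2 → ℝ,
          pd2 k (fun y => pd2 l (fun z => u z m) y) x =
            pd2 0 (fun y => ℓ 0 (𝒜 (jac2 u y))) x +
              pd2 1 (fun y => ℓ 1 (𝒜 (jac2 u y))) x := by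
  intro k l m
  obtain ⟨g, hg⟩ := exists_leftInverse_symmPairs hell
  -- `entry S = S k m l`, the entry of the second derivative to be recovered
  let entry : (Fin 2 → Matrix (Fin 2) (Fin 2) ℝ) →ₗ[ℝ] ℝ :=
    Matrix.entryLinearMap ℝ ℝ m l ∘ₗ LinearMap.proj k
  let ψ : (Fin 2 → Matrix (Fin 2) (Fin 2) ℝ) →ₗ[ℝ] ℝ := entry ∘ₗ symmPairs.subtype ∘ₗ g
  refine ⟨fun j => ψ ∘ₗ LinearMap.single ℝ (fun _ => Matrix (Fin 2) (Fin 2) ℝ) j, ?_⟩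
  intro u hu x
  let S : symmPairs := ⟨fun a => Matrix.of fun i j => pd2 a (pd2 j (fun z => u z i)) x,
    fun a i j => pd2_comm (contDiff_pi.mp hu i) a j x⟩
  have hp : ∀ j : Fin 2, pd2 j (fun y => (ψ ∘ₗ LinearMap.single ℝ
      (fun _ => Matrix (Fin 2) (Fin 2) ℝ) j) (𝒜 (jac2 u y))) x =
      ψ (Pi.single j (𝒜 (S.1 j))) := fun j =>
    pd2_linear_jac2 ((ψ ∘ₗ LinearMap.single ℝ
      (fun _ => Matrix (Fin 2) (Fin 2) ℝ) j) ∘ₗ 𝒜) hu j x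
  rw [hp 0, hp 1, ← map_add]
  have hsum : (Pi.single 0 (𝒜 (S.1 0)) + Pi.single 1 (𝒜 (S.1 1)) :
      Fin 2 → Matrix (Fin 2) (Fin 2) ℝ) = fun a => 𝒜 (S.1 a) := by
    funext a
    fin_cases a <;> simp
  rw [hsum]
  change _ = entry (g fun a => 𝒜 (S.1 a)).1
  rw [hg S]
  rfl
end

section
/- Let Ω ⊂ ℝ² be open, a₁₁, a₁₂, a₂₂ ∈ ℝ, and u ∈ C²(Ω; ℝ²). Define w₁₁ := ∂₁u₁ + a₁₁∂₂u₁, w₁₂ := ∂₁u₂ + a₁₂∂₂u₁, w₂₂ := ∂₂u₂ + a₂₂∂₂u₁. Then pointwise on Ω the vector (∂₁w₁₁, ∂₂w₁₁, ∂₁w₁₂, ∂₂w₁₂, ∂₁w₂₂, ∂₂w₂₂)ᵀ equals M·(∂₁²u₁, ∂₁∂₂u₁, ∂₂²u₁, ∂₁²u₂, ∂₁∂₂u₂, ∂₂²u₂)ᵀ, where M is the 6×6 matrix with rows (1, a₁₁, 0, 0, 0, 0), (0, 1, a₁₁, 0, 0, 0), (0, a₁₂, 0, 1, 0, 0), (0,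 0, a₁₂, 0, 1, 0), (0, a₂₂, 0, 0, 1, 0), (0, 0, a₂₂, 0, 0, 1). Consequently, if a₁₁·a₂₂ + a₁₂ ≠ 0, then every second partial derivative of u is a fixed linear combination (with coefficients depending only on a₁₁, a₁₂, a₂₂) of the six first partial derivatives ∂_k w_{ij}. -/
/-- `w₁₁ := ∂₁u₁ + a₁₁ ∂₂u₁`. -/
noncomputable def w11 (a11 : ℝ) (u : (Fin 2 → ℝ) → (Fin 2 → ℝ)) (x : Fin 2 → ℝ) : ℝ :=
  pd2 0 (fun y => u y 0) x + a11 * pd2 1 (fun y => u y 0) x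

/-- `w₁₂ := ∂₁u₂ + a₁₂ ∂₂u₁`. -/
noncomputable def w12 (a12 : ℝ) (u : (Fin 2 → ℝ) → (Fin 2 → ℝ)) (x : Fin 2 → ℝ) : ℝ :=
  pd2 0 (fun y => u y 1) x + a12 * pd2 1 (fun y => u y 0) x

/-- `w₂₂ := ∂₂u₂ + a₂₂ ∂₂u₁`. -/
noncomputable def w22 (a22 : ℝ) (u : (Fin 2 → ℝ) → (Fin 2 → ℝ)) (x : Fin 2 → ℝ) : ℝ :=
  pd2 1 (fun y => u y 1) x + a22 * pd2 1 (fun y => u y 0) x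

/-- The vector `(∂₁w₁₁, ∂₂w₁₁, ∂₁w₁₂, ∂₂w₁₂, ∂₁w₂₂, ∂₂w₂₂)`. -/
noncomputable def dWvec (a11 a12 a22 : ℝ) (u : (Fin 2 → ℝ) → (Fin 2 → ℝ))
    (x : Fin 2 → ℝ) : Fin 6 → ℝ :=
  ![pd2 0 (w11 a11 u) x, pd2 1 (w11 a11 u) x,
    pd2 0 (w12 a12 u) x, pd2 1 (w12 a12 u) x,
    pd2 0 (w22 a22 u) x, pd2 1 (w22 a22 u) x]

/-- The vector `(∂₁²u₁, ∂₁∂₂u₁, ∂₂²u₁, ∂₁²u₂, ∂₁∂₂u₂, ∂₂²u₂)`. -/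
noncomputable def d2uvec (u : (Fin 2 → ℝ) → (Fin 2 → ℝ)) (x : Fin 2 → ℝ) : Fin 6 → ℝ :=
  ![pd2 0 (fun y => pd2 0 (fun z => u z 0) y) x,
    pd2 0 (fun y => pd2 1 (fun z => u z 0) y) x,
    pd2 1 (fun y => pd2 1 (fun z => u z 0) y) x,
    pd2 0 (fun y => pd2 0 (fun z => u z 1) y) x,
    pd2 0 (fun y => pd2 1 (fun z => u z 1) y) x,
    pd2 1 (fun y => pd2 1 (fun z => u z 1) y) x]

/-- The 6×6 matrix `M`. -/
def Mmat (a11 a12 a22 : ℝ) : Matrix (Fin 6) (Fin 6) ℝ :=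
  Matrix.of
    ![![1, a11, 0, 0, 0, 0],
      ![0, 1, a11, 0, 0, 0],
      ![0, a12, 0, 1, 0, 0],
      ![0, 0, a12, 0, 1, 0],
      ![0, a22, 0, 0, 1, 0],
      ![0, 0, a22, 0, 0, 1]]

/-- `∂_j` is linear on the combinations `∂_k f + a ∂_l g` that make up the `w`'s. The sum rule
needs the first partials to be differentiable, which is where `C²` enters. -/
lemma pd2_combination {Ω : Set (Fin 2 → ℝ)} (hΩ : IsOpen Ω) {f g : (Fin 2 → ℝ) → ℝ}
    (hf : ContDiffOn ℝ 2 f Ω) (hg : ContDiffOn ℝ 2 g Ω) (a : ℝ) (j k l : Fin 2)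
    {x : Fin 2 → ℝ} (hx : x ∈ Ω) :
    pd2 j (fun y => pd2 k f y + a * pd2 l g y) x =
      pd2 j (fun y => pd2 k f y) x + a * pd2 j (fun y => pd2 l g y) x := by
  have key : ∀ {h : (Fin 2 → ℝ) → ℝ}, ContDiffOn ℝ 2 h Ω → ∀ m : Fin 2,
      DifferentiableAt ℝ (fun y => pd2 m h y) x := by
    intro h hh m
    have h1 : ContDiffAt ℝ 1 (fderiv ℝ h) x :=
      (hh.contDiffAt (hΩ.mem_nhds hx)).fderiv_right (by norm_num)
    exact (h1.differentiableAt (by norm_num)).clm_apply (differentiableAt_const _)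
  have hF := key hf k
  have hG := key hg l
  change fderiv ℝ (fun y => pd2 k f y + a * pd2 l g y) x (Pi.single j 1) = _
  rw [fderiv_fun_add hF (hG.const_mul a), fderiv_const_mul hG]
  rfl

/-- Symmetry of second derivatives; it turns the `∂₂∂₁` terms of `∂₂w₁₁` and `∂₂w₁₂` into the
`∂₁∂₂` entries of `d2uvec`. -/
lemma pd2_comm_s2 {Ω : Set (Fin 2 → ℝ)} (hΩ : IsOpen Ω) {f : (Fin 2 → ℝ) → ℝ}
    (hf : ContDiffOn ℝ 2 f Ω) {x : Fin 2 → ℝ} (hx : x ∈ Ω) :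
    pd2 1 (fun y => pd2 0 f y) x = pd2 0 (fun y => pd2 1 f y) x := by
  have hc : ContDiffAt ℝ 2 f x := hf.contDiffAt (hΩ.mem_nhds hx)
  have hd : DifferentiableAt ℝ (fderiv ℝ f) x :=
    (hc.fderiv_right (m := 1) (by norm_num)).differentiableAt (by norm_num)
  have hsymm : IsSymmSndFDerivAt ℝ f x := hc.isSymmSndFDerivAt (by simp)
  have hpd : ∀ j k : Fin 2, pd2 j (fun y => pd2 k f y) x =
      fderiv ℝ (fderiv ℝ f) x (Pi.single j 1) (Pi.single k 1) := by
    intro j k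
    change fderiv ℝ (fun y => fderiv ℝ f y (Pi.single k 1)) x (Pi.single j 1) = _
    rw [fderiv_clm_apply hd (differentiableAt_const _)]
    simp
  rw [hpd, hpd]
  exact hsymm _ _

lemma dWvec_eq_mulVec (a11 a12 a22 : ℝ) {Ω : Set (Fin 2 → ℝ)} (hΩ : IsOpen Ω)
    {u : (Fin 2 → ℝ) → (Fin 2 → ℝ)} (hu : ContDiffOn ℝ 2 u Ω) {x : Fin 2 → ℝ} (hx : x ∈ Ω) :
    dWvec a11 a12 a22 u x = (Mmat a11 a12 a22).mulVec (d2uvec u x) := by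
  have h0 : ContDiffOn ℝ 2 (fun y => u y 0) Ω := contDiffOn_pi.1 hu 0
  have h1 : ContDiffOn ℝ 2 (fun y => u y 1) Ω := contDiffOn_pi.1 hu 1
  have e11 := fun j => pd2_combination hΩ h0 h0 a11 j 0 1 hx
  have e12 := fun j => pd2_combination hΩ h1 h0 a12 j 0 1 hx
  have e22 := fun j => pd2_combination hΩ h1 h0 a22 j 1 1 hx
  have c0 := pd2_comm_s2 hΩ h0 hx
  have c1 := pd2_comm_s2 hΩ h1 hx
  change ∀ j, pd2 j (w11 a11 u) x = _ at e11
  change ∀ j, pd2 j (w12 a12 u) x = _ at e12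
  change ∀ j, pd2 j (w22 a22 u) x = _ at e22
  ext i
  fin_cases i <;>
    simp [dWvec, d2uvec, Mmat, Matrix.mulVec, dotProduct, Fin.sum_univ_six,
      e11, e12, e22, c0, c1] <;> ring

/-- `M` has trivial kernel: its rows 2, 4, 5 force `(a₁₁a₂₂ + a₁₂) ∂₂²u₁ = 0`, and the remaining
unknowns vanish by back substitution. -/
lemma isUnit_Mmat {a11 a12 a22 : ℝ} (h : a11 * a22 + a12 ≠ 0) : IsUnit (Mmat a11 a12 a22) := by
  rw [← Matrix.mulVec_injective_iff_isUnit, ← Matrix.coe_mulVecLin,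
    injective_iff_map_eq_zero]
  intro p hp
  have hrow := fun i => congrFun hp i
  have r0 := hrow 0
  have r1 := hrow 1
  have r2 := hrow 2
  have r3 := hrow 3
  have r4 := hrow 4
  have r5 := hrow 5
  simp [Mmat, Matrix.mulVec, dotProduct, Fin.sum_univ_six] at r0 r1 r2 r3 r4 r5
  have p2 : p 2 = 0 := by
    have : (a11 * a22 + a12) * p 2 = 0 := by linear_combination a22 * r1 + r3 - r4
    exact (mul_eq_zero.1 this).resolve_left h
  have p1 : p 1 = 0 := by simpa [p2] using r1
  ext i
  fin_cases i <;> simp_all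

/-- On an open set `Ω ⊂ ℝ²`, for `u ∈ C²(Ω; ℝ²)` the vector of first derivatives of
`w₁₁, w₁₂, w₂₂` equals `M` applied to the vector of second derivatives of `u`; consequently,
if `a₁₁a₂₂ + a₁₂ ≠ 0`, every second partial derivative of a `C²` map is a fixed linear
combination (coefficients depending only on `a₁₁, a₁₂, a₂₂`) of the `∂_k w_{ij}`. -/
theorem stmt2 (a11 a12 a22 : ℝ) (Ω : Set (Fin 2 → ℝ)) (hΩ : IsOpen Ω)
    (u : (Fin 2 → ℝ) → (Fin 2 → ℝ)) (hu : ContDiffOn ℝ 2 u Ω) :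
    (∀ x ∈ Ω, dWvec a11 a12 a22 u x = (Mmat a11 a12 a22).mulVec (d2uvec u x)) ∧
    (a11 * a22 + a12 ≠ 0 →
      ∃ C : Fin 6 → Fin 6 → ℝ,
        ∀ (Ω' : Set (Fin 2 → ℝ)), IsOpen Ω' →
          ∀ v : (Fin 2 → ℝ) → (Fin 2 → ℝ), ContDiffOn ℝ 2 v Ω' →
            ∀ x ∈ Ω', ∀ i : Fin 6,
              d2uvec v x i = ∑ j : Fin 6, C i j * dWvec a11 a12 a22 v x j) := by
  refine ⟨fun x hx => dWvec_eq_mulVec a11 a12 a22 hΩ hu hx, fun h => ?_⟩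
  -- The ascription selects the matrix inverse rather than the entrywise inverse of functions.
  refine ⟨((Mmat a11 a12 a22)⁻¹ : Matrix (Fin 6) (Fin 6) ℝ), fun Ω' hΩ' v hv x hx i => ?_⟩
  have hdet := (Matrix.isUnit_iff_isUnit_det _).1 (isUnit_Mmat h)
  have hinv : d2uvec v x = (Mmat a11 a12 a22)⁻¹.mulVec (dWvec a11 a12 a22 v x) := by
    rw [dWvec_eq_mulVec a11 a12 a22 hΩ' hv hx, Matrix.mulVec_mulVec,
      Matrix.nonsing_inv_mul _ hdet, Matrix.one_mulVec]
  rw [hinv]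
  simp only [Matrix.mulVec, dotProduct]
end

section
/- Let n ≥ 2, let Ω ⊂ ℝⁿ be open and connected, and let u ∈ C²(Ω; ℝⁿ). Then dev Du(x) = 0 for all x ∈ Ω (equivalently, Du(x) = (div u(x)/n)·Iₙ for all x ∈ Ω) if and only if there exist λ ∈ ℝ and b ∈ ℝⁿ such that u(x) = λx + b for all x ∈ Ω. -/
/-!
If `dev Du = 0` then the full derivative of `u` at `x` is a multiple `c x • id` of the identity
(`fderiv_eq_smul_id_of_devM_eq_zero`), where `c` is a diagonal entry of `Du`, hence `C¹`.
Differentiating once more, `D²u(x)(v, w) = (Dc(x) v) • w`. Symmetry of the second derivative gives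
`(Dc(x) v) • w = (Dc(x) w) • v`; as `n ≥ 2`, every basis vector `v` has a linearly independent
companion `w`, so `Dc = 0` (`eq_zero_of_smul_symm`). By connectedness `c` is a constant `λ`, and
`u - λ • id` has zero derivative, so it is constant too. The converse is a direct computation.
-/

/-- Partial derivative in direction `j` of a scalar function on `ℝⁿ`. -/
noncomputable def pdn (n : ℕ) (j : Fin n) (f : (Fin n → ℝ) → ℝ) (x : Fin n → ℝ) : ℝ :=
  fderiv ℝ f x (Pi.single j 1)

/-- Jacobian matrix `(Du)_{ij} = ∂_j u_i`. -/
noncomputable def jacn (n : ℕ) (u : (Fin n → ℝ) → (Fin n → ℝ)) (x : Fin n → ℝ) :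
    Matrix (Fin n) (Fin n) ℝ :=
  Matrix.of fun i j => pdn n j (fun y => u y i) x

/-- Deviatoric (trace-free) part of a square matrix: `dev P = P − (tr P / n)·Iₙ`. -/
noncomputable def devM (n : ℕ) (M : Matrix (Fin n) (Fin n) ℝ) : Matrix (Fin n) (Fin n) ℝ :=
  M - (Matrix.trace M / n) • (1 : Matrix (Fin n) (Fin n) ℝ)

/-- The entries of the Jacobian are coordinates of the Fréchet derivative. -/
lemma jacn_apply {n : ℕ} {u : (Fin n → ℝ) → (Fin n → ℝ)} {x : Fin n → ℝ}
    (hu : DifferentiableAt ℝ u x) (i j : Fin n) :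
    jacn n u x i j = fderiv ℝ u x (Pi.single j 1) i := by
  have h := (hasFDerivAt_pi'.1 hu.hasFDerivAt i).fderiv
  simp only [jacn, pdn, Matrix.of_apply]
  rw [h]
  rfl

lemma fderiv_eq_smul_id_of_devM_eq_zero {n : ℕ} {u : (Fin n → ℝ) → (Fin n → ℝ)} {x : Fin n → ℝ}
    (hu : DifferentiableAt ℝ u x) (h : devM n (jacn n u x) = 0) (k : Fin n) :
    fderiv ℝ u x = fderiv ℝ u x (Pi.single k 1) k • ContinuousLinearMap.id ℝ (Fin n → ℝ) := by
  have hM := sub_eq_zero.1 h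
  set t : ℝ := Matrix.trace (jacn n u x) / n
  have hent : ∀ i j, fderiv ℝ u x (Pi.single j 1) i = t * (1 : Matrix (Fin n) (Fin n) ℝ) i j := by
    intro i j
    rw [← jacn_apply hu, hM]
    rfl
  rw [hent k k]
  apply ContinuousLinearMap.coe_injective
  refine LinearMap.pi_ext' fun j => LinearMap.ext_ring ?_
  ext i
  simp [hent, Matrix.one_apply, Pi.single_apply]

/-- In dimension at least two, a linear form `L` with `L v • w = L w • v` for all `v`, `w`
vanishes. -/
lemma eq_zero_of_smul_symm {n : ℕ} (hn : 2 ≤ n) (L : (Fin n → ℝ) →L[ℝ] ℝ)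
    (h : ∀ v w, L v • w = L w • v) : L = 0 := by
  have : Nontrivial (Fin n) := Fin.nontrivial_iff_two_le.2 hn
  apply ContinuousLinearMap.coe_injective
  refine LinearMap.pi_ext' fun j => LinearMap.ext_ring ?_
  obtain ⟨i, hi⟩ := exists_ne j
  have := congrFun (h (Pi.single j 1) (Pi.single i 1)) i
  simpa [hi] using this

/-- For `n ≥ 2`, `Ω ⊂ ℝⁿ` open and connected and `u ∈ C²(Ω; ℝⁿ)`: `dev Du ≡ 0` on `Ω`
iff `u(x) = λx + b` on `Ω` for some `λ ∈ ℝ`, `b ∈ ℝⁿ`. -/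
theorem stmt4 (n : ℕ) (hn : 2 ≤ n)
    (Ω : Set (Fin n → ℝ)) (hΩ : IsOpen Ω) (hconn : IsConnected Ω)
    (u : (Fin n → ℝ) → (Fin n → ℝ)) (hu : ContDiffOn ℝ 2 u Ω) :
    (∀ x ∈ Ω, devM n (jacn n u x) = 0) ↔
      ∃ (lam : ℝ) (b : Fin n → ℝ), ∀ x ∈ Ω, u x = lam • x + b := by
  have hcd : ∀ x ∈ Ω, ContDiffAt ℝ 2 u x := fun x hx => hu.contDiffAt (hΩ.mem_nhds hx)
  have hdiff : ∀ x ∈ Ω, DifferentiableAt ℝ u x := fun x hx =>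
    (hcd x hx).differentiableAt (by norm_num)
  constructor
  · intro h
    let k : Fin n := ⟨0, by omega⟩
    let c : (Fin n → ℝ) → ℝ := fun x => fderiv ℝ u x (Pi.single k 1) k
    have hDu : ∀ x ∈ Ω, fderiv ℝ u x = c x • ContinuousLinearMap.id ℝ (Fin n → ℝ) :=
      fun x hx => fderiv_eq_smul_id_of_devM_eq_zero (hdiff x hx) (h x hx) k
    have hc : ∀ x ∈ Ω, DifferentiableAt ℝ c x := by
      intro x hx
      have h2 : DifferentiableAt ℝ (fderiv ℝ u) x :=
        ((hcd x hx).fderiv_right (m := 1) (by norm_num)).differentiableAt (by norm_num)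
      exact differentiableAt_pi.1 (h2.clm_apply (differentiableAt_const _)) k
    have hDc : ∀ x ∈ Ω, fderiv ℝ c x = 0 := by
      intro x hx
      have hsymm : IsSymmSndFDerivAt ℝ u x := (hcd x hx).isSymmSndFDerivAt (by simp)
      have hev : fderiv ℝ u =ᶠ[nhds x] fun y => c y • ContinuousLinearMap.id ℝ (Fin n → ℝ) :=
        Filter.eventually_of_mem (hΩ.mem_nhds hx) hDu
      have h2 : ∀ v w, fderiv ℝ (fderiv ℝ u) x v w = fderiv ℝ c x v • w := by
        intro v w
        rw [hev.fderiv_eq, ((hc x hx).hasFDerivAt.smul_const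
          (ContinuousLinearMap.id ℝ (Fin n → ℝ))).fderiv]
        rfl
      refine eq_zero_of_smul_symm hn _ fun v w => ?_
      rw [← h2, ← h2]
      exact hsymm v w
    obtain ⟨lam, hlam⟩ := hΩ.exists_is_const_of_fderiv_eq_zero hconn.isPreconnected
      (fun x hx => (hc x hx).differentiableWithinAt) hDc
    have hsub : ∀ x ∈ Ω, HasFDerivAt (fun y => u y - lam • y)
        (0 : (Fin n → ℝ) →L[ℝ] (Fin n → ℝ)) x := by
      intro x hx
      have h1 := (hdiff x hx).hasFDerivAt.sub ((hasFDerivAt_id (𝕜 := ℝ) x).const_smul lam)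
      rw [hDu x hx, hlam x hx, sub_self] at h1
      exact h1
    obtain ⟨b, hb⟩ := hΩ.exists_is_const_of_fderiv_eq_zero hconn.isPreconnected
      (fun x hx => (hsub x hx).differentiableAt.differentiableWithinAt)
      (fun x hx => (hsub x hx).fderiv)
    exact ⟨lam, b, fun x hx => by rw [← hb x hx]; abel⟩
  · rintro ⟨lam, b, h⟩ x hx
    have hev : u =ᶠ[nhds x] fun y => lam • y + b :=
      Filter.eventually_of_mem (hΩ.mem_nhds hx) h
    have hD : fderiv ℝ u x = lam • ContinuousLinearMap.id ℝ (Fin n → ℝ) := by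
      rw [hev.fderiv_eq]
      exact (((hasFDerivAt_id (𝕜 := ℝ) x).const_smul lam).add_const b).fderiv
    have hJ : jacn n u x = lam • (1 : Matrix (Fin n) (Fin n) ℝ) := by
      ext i j
      rw [jacn_apply (hdiff x hx), hD]
      simp [Matrix.one_apply, Pi.single_apply]
    have hn0 : (n : ℝ) ≠ 0 := by
      have : n ≠ 0 := by omega
      exact_mod_cast this
    rw [devM, hJ, Matrix.trace_smul, Matrix.trace_one, Fintype.card_fin, smul_eq_mul,
      mul_div_cancel_right₀ _ hn0, sub_self]
end

section
/- Let n ≥ 2. There exist linear functionals λ_s^{k,l,m} : ℝ^{n×n} → ℝ (indexed by s, k, l, m ∈ {1,…,n}) such that for every open set Ω ⊂ ℝⁿ and every u ∈ C²(Ω; ℝⁿ) one has, pointwise on Ω, ∂_k ∂_l u_m = Σ_{s=1}^n ∂_s ( λ_s^{k,l,m}(dev Du) ); that is, D² = 𝕃 ∘ (dev ∘ D) for a first-order linear constant-coefficient operator 𝕃. -/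
/-- The functional `P ↦ P i j` on square matrices. -/
def entryFun (n : ℕ) (i j : Fin n) : Matrix (Fin n) (Fin n) ℝ →ₗ[ℝ] ℝ where
  toFun P := P i j
  map_add' _ _ := rfl
  map_smul' _ _ := rfl

lemma pdn_differentiableAt {n : ℕ} {f : (Fin n → ℝ) → ℝ} {x : Fin n → ℝ}
    (hf : ContDiffAt ℝ 2 f x) (j : Fin n) : DifferentiableAt ℝ (pdn n j f) x := by
  have h : DifferentiableAt ℝ (fderiv ℝ f) x :=
    (hf.fderiv_right (m := 1) (by norm_num)).differentiableAt (by norm_num)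
  exact h.clm_apply (differentiableAt_const _)

lemma pdn_comm {n : ℕ} {f : (Fin n → ℝ) → ℝ} {x : Fin n → ℝ}
    (hf : ContDiffAt ℝ 2 f x) (j k : Fin n) :
    pdn n j (pdn n k f) x = pdn n k (pdn n j f) x := by
  have h : DifferentiableAt ℝ (fderiv ℝ f) x :=
    (hf.fderiv_right (m := 1) (by norm_num)).differentiableAt (by norm_num)
  have key : ∀ a b : Fin n, pdn n a (pdn n b f) x
      = fderiv ℝ (fderiv ℝ f) x (Pi.single a 1) (Pi.single b 1) := by
    intro a b
    have := (h.hasFDerivAt.clm_apply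
      (hasFDerivAt_const (Pi.single b (1 : ℝ) : Fin n → ℝ) x)).fderiv
    change fderiv ℝ (fun y => fderiv ℝ f y (Pi.single b 1)) x (Pi.single a 1) = _
    rw [this]
    simp
  rw [key, key]
  exact (hf.isSymmSndFDerivAt (by simp)) _ _

lemma pdn_comb3 {n : ℕ} {f g h : (Fin n → ℝ) → ℝ} {x : Fin n → ℝ}
    (hf : DifferentiableAt ℝ f x) (hg : DifferentiableAt ℝ g x) (hh : DifferentiableAt ℝ h x)
    (a b c : ℝ) (s : Fin n) :
    pdn n s (fun y => a * f y + b * g y + c * h y) x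
      = a * pdn n s f x + b * pdn n s g x + c * pdn n s h x := by
  have := (((hf.hasFDerivAt.const_mul a).add (hg.hasFDerivAt.const_mul b)).add
    (hh.hasFDerivAt.const_mul c)).fderiv
  change fderiv ℝ ((fun y => a * f y) + (fun y => b * g y) + (fun y => c * h y)) x _ = _
  rw [this]
  simp [pdn]


/-- For `n ≥ 2` there exist linear functionals `λ_s^{k,l,m}` on `ℝ^{n×n}` such that every
second partial derivative of a `C²` map `u` on an open set is recovered from first
derivatives of `dev Du`:  `∂_k ∂_l u_m = Σ_s ∂_s (λ_s^{k,l,m}(dev Du))`, i.e.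
`D² = 𝕃 ∘ (dev ∘ D)` for a first-order constant-coefficient operator `𝕃`. -/
theorem stmt6 (n : ℕ) (hn : 2 ≤ n) :
    ∃ lam : Fin n → Fin n → Fin n → Fin n → (Matrix (Fin n) (Fin n) ℝ →ₗ[ℝ] ℝ),
      ∀ (Ω : Set (Fin n → ℝ)), IsOpen Ω →
        ∀ u : (Fin n → ℝ) → (Fin n → ℝ), ContDiffOn ℝ 2 u Ω →
          ∀ x ∈ Ω, ∀ k l m : Fin n,
            pdn n k (fun y => pdn n l (fun z => u z m) y) x =
              ∑ s : Fin n, pdn n s (fun y => lam s k l m (devM n (jacn n u y))) x := by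
  have hj : ∀ k : Fin n, ∃ j : Fin n, j ≠ k := by
    have : Nontrivial (Fin n) := Fin.nontrivial_iff_two_le.mpr hn
    exact exists_ne
  choose j hj using hj
  refine ⟨fun s k l m =>
    (if s = k then (1 : ℝ) else 0) • entryFun n m l
    + (if m = l ∧ s = j k then (1 : ℝ) else 0) • entryFun n (j k) k
    + (if m = l ∧ s = k then (-1 : ℝ) else 0) • entryFun n (j k) (j k), ?_⟩
  intro Ω hΩ u hu x hx k l m
  have hux : ContDiffAt ℝ 2 u x := hu.contDiffAt (hΩ.mem_nhds hx)
  have hc : ∀ i, ContDiffAt ℝ 2 (fun z => u z i) x := fun i => contDiffAt_pi.mp hux i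
  let t : (Fin n → ℝ) → ℝ := fun y => (∑ i, pdn n i (fun z => u z i) y) / n
  have ht : DifferentiableAt ℝ t x := by
    have hsum : DifferentiableAt ℝ (fun y => ∑ i, pdn n i (fun z => u z i) y) x :=
      DifferentiableAt.fun_sum fun i _ => pdn_differentiableAt (hc i) i
    simpa only [t, div_eq_mul_inv] using hsum.mul_const (n : ℝ)⁻¹
  -- The vacuous summand `0 * t y` brings the entry into the three-term form of `pdn_comb3`.
  have hV : ∀ a b, (fun y => devM n (jacn n u y) a b)
      = fun y => 1 * pdn n b (fun z => u z a) y + (if a = b then (-1 : ℝ) else 0) * t y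
        + 0 * t y := by
    intro a b
    funext y
    by_cases hab : a = b <;>
      simp [devM, jacn, Matrix.trace, t, hab, sub_eq_add_neg]
  have hVd : ∀ a b, DifferentiableAt ℝ (fun y => devM n (jacn n u y) a b) x := by
    intro a b
    rw [hV]
    exact (((pdn_differentiableAt (hc a) b).const_mul _).add (ht.const_mul _)).add
      (ht.const_mul _)
  have hVp : ∀ s a b, pdn n s (fun y => devM n (jacn n u y) a b) x
      = pdn n s (pdn n b (fun z => u z a)) x + (if a = b then (-1 : ℝ) else 0) * pdn n s t x := by
    intro s a b
    rw [hV, pdn_comb3 (pdn_differentiableAt (hc a) b) ht ht]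
    ring
  have hL : ∀ s, pdn n s (fun y => ((if s = k then (1 : ℝ) else 0) • entryFun n m l
      + (if m = l ∧ s = j k then (1 : ℝ) else 0) • entryFun n (j k) k
      + (if m = l ∧ s = k then (-1 : ℝ) else 0) • entryFun n (j k) (j k))
        (devM n (jacn n u y))) x = _ :=
    fun s => pdn_comb3 (hVd m l) (hVd (j k) k) (hVd (j k) (j k)) _ _ _ s
  rw [Finset.sum_congr rfl fun s _ => hL s]
  simp only [hVp, Finset.sum_add_distrib]
  change pdn n k (pdn n l (fun z => u z m)) x = _
  by_cases hml : m = l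
  · subst hml
    simp [hj k, pdn_comm (hc (j k)) (j k) k]
    ring
  · simp [hml]
end

section
/- Let n ≥ 2. For every ξ ∈ ℂⁿ with ξ ≠ 0 and every v ∈ ℂⁿ, if dev(v ξᵀ) = 0, i.e. v ξᵀ = ((ξᵀv)/n)·Iₙ as complex n×n matrices, then v = 0. In other words, the deviatoric gradient operator dev[· ⊗ ∇] is ℂ-elliptic in all dimensions n ≥ 2. -/
/-! If `dev(v ξᵀ) = 0`, then `v ξᵀ = c·Iₙ` for a scalar `c`. The left side has rank at most one,
whereas `c·Iₙ` has rank `n ≥ 2` unless `c = 0`; hence `v ξᵀ = 0`, and `ξ ≠ 0` gives `v = 0`.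
The rank comparison is carried out entrywise, using a column `j` with `ξ j ≠ 0`. -/

/-- Deviatoric (trace-free) part of a complex square matrix: `dev M = M − (tr M / n)·Iₙ`. -/
noncomputable def devC (n : ℕ) (M : Matrix (Fin n) (Fin n) ℂ) : Matrix (Fin n) (Fin n) ℂ :=
  M - (Matrix.trace M / n) • (1 : Matrix (Fin n) (Fin n) ℂ)

/-- The deviatoric gradient operator `dev[· ⊗ ∇]` is ℂ-elliptic in all dimensions `n ≥ 2`:
for every `ξ ∈ ℂⁿ \ {0}` and `v ∈ ℂⁿ`, `dev(v ξᵀ) = 0` forces `v = 0`. -/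
theorem stmt7 (n : ℕ) (hn : 2 ≤ n) :
    ∀ ξ : Fin n → ℂ, ξ ≠ 0 → ∀ v : Fin n → ℂ,
      devC n (Matrix.of fun i j => v i * ξ j) = 0 → v = 0 := by
  intro ξ hξ v h
  obtain ⟨j, hj⟩ := Function.ne_iff.mp hξ
  have hj : ξ j ≠ 0 := hj
  rw [devC, sub_eq_zero] at h
  generalize Matrix.trace (Matrix.of fun i j => v i * ξ j) / (n : ℂ) = c at h
  have entry (i k : Fin n) : v i * ξ k = c * (1 : Matrix (Fin n) (Fin n) ℂ) i k :=
    congrFun (congrFun h i) k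
  -- The off-diagonal entries of column `j` kill every component of `v` except possibly `v j`.
  have off (i : Fin n) (hij : i ≠ j) : v i = 0 := by
    have := entry i j
    rw [Matrix.one_apply_ne hij, mul_zero] at this
    exact (mul_eq_zero.mp this).resolve_right hj
  -- Since `n ≥ 2`, a diagonal entry away from `j` exists and shows that the scalar vanishes.
  have : Nontrivial (Fin n) := Fin.nontrivial_iff_two_le.mpr hn
  obtain ⟨i, hij⟩ := exists_ne j
  have hc : c = 0 := by
    have := entry i i
    rwa [off i hij, zero_mul, Matrix.one_apply_eq, mul_one, eq_comm] at this
  funext k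
  have := entry k j
  rw [hc, zero_mul] at this
  exact (mul_eq_zero.mp this).resolve_right hj
end

section
/- Let E be a finite-dimensional real inner product space and f : E → ℝ a convex differentiable function satisfying c₁‖z‖ ≤ f(z) ≤ c₂(1 + ‖z‖) for all z ∈ E, with constants 0 < c₁ ≤ c₂. Then (1) ‖∇f(z)‖ ≤ c₂ for all z ∈ E (in particular f is Lipschitz with constant c₂), and (2) ⟨∇f(z), z⟩ ≥ c₁‖z‖ − c₂ for all z ∈ E. -/
/-!
Everything follows from the first-order convexity inequality `f z + ⟪∇f z, v⟫ ≤ f (z + v)`.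
Taking `v = t • ∇f z` and letting `t` be large, the left side grows like `t ‖∇f z‖²` while the
upper growth bound allows at most `t c₂ ‖∇f z‖`, so `‖∇f z‖ ≤ c₂`; the Lipschitz bound is then the
mean value inequality. Taking `v = -z` gives `⟪∇f z, z⟫ ≥ f z - f 0 ≥ c₁ ‖z‖ - c₂`.
-/

open scoped RealInnerProductSpace

/-- First-order characterization of convexity, obtained by comparing the derivative at `0` of
`t ↦ f (z + t • v)` with the slope of this function on `[0, 1]`. -/
theorem add_inner_gradient_le {E : Type*} [NormedAddCommGroup E] [InnerProductSpace ℝ E]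
    [CompleteSpace E] {f : E → ℝ} (hconv : ConvexOn ℝ Set.univ f) (hdiff : Differentiable ℝ f)
    (z v : E) : f z + ⟪gradient f z, v⟫ ≤ f (z + v) := by
  rw [inner_gradient_left]
  have hline : ConvexOn ℝ Set.univ (fun t : ℝ => f (z + t • v)) := by
    have h := hconv.comp_affineMap (AffineMap.lineMap z (z + v))
    have heq : f ∘ (AffineMap.lineMap z (z + v) : ℝ →ᵃ[ℝ] E) = fun t : ℝ => f (z + t • v) := by
      funext t
      simp [AffineMap.lineMap_apply, add_comm]
    rwa [heq, Set.preimage_univ] at h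
  have hder : HasDerivAt (fun t : ℝ => f (z + t • v)) (fderiv ℝ f z v) 0 :=
    (hdiff z).hasFDerivAt.hasLineDerivAt v
  have h := hline.le_slope_of_hasDerivAt (Set.mem_univ 0) (Set.mem_univ 1) one_pos hder
  simp only [slope_def_field, one_smul, zero_smul, add_zero, sub_zero, div_one] at h
  linarith

/-- A convex differentiable function of linear growth on a finite-dimensional real inner
product space has gradient bounded by `c₂` (hence is `c₂`-Lipschitz) and satisfies
`⟨∇f(z), z⟩ ≥ c₁‖z‖ − c₂`. -/
theorem stmt10 {E : Type*} [NormedAddCommGroup E] [InnerProductSpace ℝ E]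
    [FiniteDimensional ℝ E]
    (f : E → ℝ) (hconv : ConvexOn ℝ Set.univ f) (hdiff : Differentiable ℝ f)
    (c1 c2 : ℝ) (hc1 : 0 < c1) (hc12 : c1 ≤ c2)
    (hgrowth : ∀ z : E, c1 * ‖z‖ ≤ f z ∧ f z ≤ c2 * (1 + ‖z‖)) :
    (∀ z : E, ‖gradient f z‖ ≤ c2) ∧
    LipschitzWith c2.toNNReal f ∧
    (∀ z : E, c1 * ‖z‖ - c2 ≤ ⟪gradient f z, z⟫) := by
  have hc2 : 0 < c2 := hc1.trans_le hc12
  have hgrad : ∀ z : E, ‖gradient f z‖ ≤ c2 := by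
    intro z
    by_contra! hlt
    set g := gradient f z with hg
    have hpos : 0 < ‖g‖ * (‖g‖ - c2) := mul_pos (hc2.trans hlt) (sub_pos.2 hlt)
    have hK : 0 ≤ c2 * (1 + ‖z‖) - f z := sub_nonneg.2 (hgrowth z).2
    -- `t` is chosen so that `t ‖g‖ (‖g‖ - c₂)` exceeds its upper bound `c₂ (1 + ‖z‖) - f z` by `1`.
    obtain ⟨t, ht0, ht⟩ : ∃ t : ℝ, 0 ≤ t ∧
        t * (‖g‖ * (‖g‖ - c2)) = c2 * (1 + ‖z‖) - f z + 1 :=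
      ⟨(c2 * (1 + ‖z‖) - f z + 1) / (‖g‖ * (‖g‖ - c2)), by positivity,
        div_mul_cancel₀ _ hpos.ne'⟩
    have h1 := add_inner_gradient_le hconv hdiff z (t • g)
    rw [← hg, real_inner_smul_right, real_inner_self_eq_norm_sq] at h1
    have h2 := (hgrowth (z + t • g)).2
    have h3 : ‖z + t • g‖ ≤ ‖z‖ + t * ‖g‖ := by
      simpa [norm_smul, abs_of_nonneg ht0] using norm_add_le z (t • g)
    have h4 := mul_le_mul_of_nonneg_left h3 hc2.le
    linarith
  refine ⟨hgrad, ?_, ?_⟩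
  · refine lipschitzWith_of_nnnorm_fderiv_le (𝕜 := ℝ) hdiff fun z => ?_
    rw [← NNReal.coe_le_coe, coe_nnnorm, Real.coe_toNNReal _ hc2.le, ← toDual_gradient,
      LinearIsometryEquiv.norm_map]
    exact hgrad z
  · intro z
    have h := add_inner_gradient_le hconv hdiff z (-z)
    rw [inner_neg_right, add_neg_cancel] at h
    have h0 := (hgrowth 0).2
    rw [norm_zero] at h0
    linarith [(hgrowth z).1]
end
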